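/- arXiv:1408.5797 — 3 statements merged into one kernel-verified Lean document; each statement's English description precedes it below -/
import Mathlib

section
/- Let F ⊆ Sym²(ℝⁿ) be an ST-invariant cone subequation with finite Riesz characteristic p, let 0 ≤ a < b ≤ ∞, and let ψ : (a, b) → ℝ be nondecreasing. Then the radial function u(x) = ψ(|x|) is F-harmonic on the annulus {x : a < |x| < b} if and only if there exist constants Θ ≥ 0 and C ∈ ℝ with ψ(t) = Θ·K_p(t) + C for all t ∈ (a, b). -/
open Set Filter Topology Matrix

noncomputable section

abbrev EucSp (n : ℕ) := EuclideanSpace ℝ (Fin n)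

/-- The rank-one orthogonal projection matrix `P_e = e eᵀ` associated to a vector `e`. -/
def projMat {n : ℕ} (e : EucSp n) : Matrix (Fin n) (Fin n) ℝ :=
  Matrix.of fun i j => e i * e j

/-- A (pure second-order, constant coefficient) subequation: a closed set of symmetric
matrices satisfying positivity `F + 𝒫 ⊆ F`. -/
def IsSubequation {n : ℕ} (F : Set (Matrix (Fin n) (Fin n) ℝ)) : Prop :=
  (∀ A ∈ F, A.IsSymm) ∧ IsClosed F ∧
    ∀ A ∈ F, ∀ P : Matrix (Fin n) (Fin n) ℝ, P.PosSemidef → A + P ∈ F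

/-- A cone subequation. -/
def IsConeSubequation {n : ℕ} (F : Set (Matrix (Fin n) (Fin n) ℝ)) : Prop :=
  IsSubequation F ∧ ∀ A ∈ F, ∀ t : ℝ, 0 ≤ t → t • A ∈ F

/-- `F` is invariant under a closed subgroup of `O(n)` acting transitively on the
unit sphere. -/
def STInvariant {n : ℕ} (F : Set (Matrix (Fin n) (Fin n) ℝ)) : Prop :=
  ∃ G : Set (Matrix (Fin n) (Fin n) ℝ),
    IsClosed G ∧
    G ⊆ (Matrix.orthogonalGroup (Fin n) ℝ : Set (Matrix (Fin n) (Fin n) ℝ)) ∧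
    (1 : Matrix (Fin n) (Fin n) ℝ) ∈ G ∧
    (∀ g ∈ G, ∀ h ∈ G, g * h ∈ G) ∧
    (∀ g ∈ G, g⁻¹ ∈ G) ∧
    (∀ x y : EucSp n, ‖x‖ = 1 → ‖y‖ = 1 → ∃ g ∈ G, Matrix.toEuclideanLin g x = y) ∧
    (∀ g ∈ G, ∀ A ∈ F, gᵀ * A * g ∈ F)

/-- The interior of `F` relative to the subspace `Sym²(ℝⁿ)` of symmetric matrices. -/
def symInterior {n : ℕ} (F : Set (Matrix (Fin n) (Fin n) ℝ)) :
    Set (Matrix (Fin n) (Fin n) ℝ) :=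
  {A | ∃ U ∈ 𝓝 A, ∀ B ∈ U, B.IsSymm → B ∈ F}

/-- The frontier of `F` relative to the subspace `Sym²(ℝⁿ)` of symmetric matrices. -/
def symFrontier {n : ℕ} (F : Set (Matrix (Fin n) (Fin n) ℝ)) :
    Set (Matrix (Fin n) (Fin n) ℝ) :=
  closure F \ symInterior F

/-- `F` has finite (increasing) Riesz characteristic `p`:
`P_{e⊥} − (p−1) P_e ∈ ∂F` for every unit vector `e`. -/
def HasRieszChar {n : ℕ} (F : Set (Matrix (Fin n) (Fin n) ℝ)) (p : ℝ) : Prop :=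
  1 ≤ p ∧ ∀ e : EucSp n, ‖e‖ = 1 →
    ((1 : Matrix (Fin n) (Fin n) ℝ) - projMat e) - (p - 1) • projMat e ∈ symFrontier F

/-- `F` has finite decreasing Riesz characteristic `q`:
`−P_{e⊥} + (q−1) P_e ∈ ∂F` for every unit vector `e`. -/
def HasDualRieszChar {n : ℕ} (F : Set (Matrix (Fin n) (Fin n) ℝ)) (q : ℝ) : Prop :=
  1 ≤ q ∧ ∀ e : EucSp n, ‖e‖ = 1 →
    -((1 : Matrix (Fin n) (Fin n) ℝ) - projMat e) + (q - 1) • projMat e ∈ symFrontier F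

/-- The Hessian matrix of a function `φ : ℝⁿ → ℝ` at `x`. -/
def hess {n : ℕ} (φ : EucSp n → ℝ) (x : EucSp n) : Matrix (Fin n) (Fin n) ℝ :=
  Matrix.of fun i j =>
    iteratedFDeriv ℝ 2 φ x ![EuclideanSpace.single i (1 : ℝ), EuclideanSpace.single j (1 : ℝ)]

/-- `u` is `F`-subharmonic (a viscosity subsolution) on `X`. -/
def IsFSubharmonicOn {n : ℕ} (F : Set (Matrix (Fin n) (Fin n) ℝ))
    (X : Set (EucSp n)) (u : EucSp n → EReal) : Prop :=
  UpperSemicontinuousOn u X ∧ (∀ x ∈ X, u x < ⊤) ∧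
    ∀ x₀ ∈ X, ∀ φ : EucSp n → ℝ, ContDiffAt ℝ 2 φ x₀ →
      (∀ᶠ x in 𝓝[X] x₀, u x ≤ ((φ x : ℝ) : EReal)) → u x₀ = ((φ x₀ : ℝ) : EReal) →
      hess φ x₀ ∈ F

/-- The dual subequation `F̃ = {A : −A ∉ Int F}` (interior relative to `Sym²(ℝⁿ)`). -/
def dualSubeq {n : ℕ} (F : Set (Matrix (Fin n) (Fin n) ℝ)) :
    Set (Matrix (Fin n) (Fin n) ℝ) :=
  {A | A.IsSymm ∧ -A ∉ symInterior F}

/-- `u` is `F`-harmonic on `X`: `u` is `F`-subharmonic and `−u` is `F̃`-subharmonic. -/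
def IsFHarmonicOn {n : ℕ} (F : Set (Matrix (Fin n) (Fin n) ℝ))
    (X : Set (EucSp n)) (u : EucSp n → ℝ) : Prop :=
  IsFSubharmonicOn F X (fun x => ((u x : ℝ) : EReal)) ∧
  IsFSubharmonicOn (dualSubeq F) X (fun x => ((-(u x) : ℝ) : EReal))

/-- The Riesz kernel `K_p`. -/
def rieszKernel (p t : ℝ) : ℝ :=
  if p < 2 then t ^ (2 - p) else if p = 2 then Real.log t else -(t ^ (2 - p))

/-!
In the coordinate `s = K_p(|x|)`, the Hessian of `g(K_p(|x|))` acts as `g' K_p' / |x|` on the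
hyperplane orthogonal to `x` and as `g'' K_p'² - (p - 1) g' K_p' / |x|` on the line `ℝx`. Since `F`
is a cone of Riesz characteristic `p`, for `g' > 0` this Hessian lies in `F` exactly when
`g'' ≥ 0` and in `Int F` exactly when `g'' > 0`. In particular every nondecreasing affine `g` yields
a harmonic function. Conversely, let `u(x) = ψ(|x|)` be increasing and harmonic, and take the chord
of `ψ`, seen as a function of `s`, over an interval. Bending the chord slightly upwards gives a
strictly concave parabola whose Hessian is outside `F`, bending it downwards a strictly convex one
whose Hessian is in `Int F`. By comparison on the shell over the interval, `ψ` lies between the two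
parabolas, and letting the curvature tend to `0` shows that `ψ` is affine in `s`.
-/

lemma posSemidef_smul_one_add {ι : Type*} [Fintype ι] [DecidableEq ι] {M : Matrix ι ι ℝ}
    (hM : M.IsSymm) {ε : ℝ} (hε : ‖toEuclideanCLM (𝕜 := ℝ) M‖ ≤ ε) :
    (ε • (1 : Matrix ι ι ℝ) + M).PosSemidef := by
  refine .of_dotProduct_mulVec_nonneg
    (isHermitian_iff_isSymm.2 ((isSymm_one.smul ε).add hM)) fun v => ?_
  set x : EuclideanSpace ℝ ι := WithLp.toLp 2 v
  have hv : v ⬝ᵥ v = ‖x‖ ^ 2 := by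
    rw [EuclideanSpace.real_norm_sq_eq]
    simp only [x, dotProduct, sq]
  have hMv : v ⬝ᵥ M *ᵥ v = inner ℝ x (toEuclideanCLM (𝕜 := ℝ) M x) :=
    (inner_toEuclideanCLM ..).symm
  have hbound : |v ⬝ᵥ M *ᵥ v| ≤ ε * ‖x‖ ^ 2 := by
    calc |v ⬝ᵥ M *ᵥ v| ≤ ‖x‖ * ‖toEuclideanCLM (𝕜 := ℝ) M x‖ := hMv ▸ abs_real_inner_le_norm _ _
      _ ≤ ‖x‖ * (ε * ‖x‖) := by gcongr; exact ContinuousLinearMap.le_of_opNorm_le _ hε x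
      _ = ε * ‖x‖ ^ 2 := by ring
  rw [star_trivial, add_mulVec, dotProduct_add, smul_mulVec, one_mulVec, dotProduct_smul, hv,
    smul_eq_mul]
  linarith [neg_le_of_abs_le hbound]

lemma eventually_norm_toEuclideanCLM_sub_lt {ι : Type*} [Fintype ι] [DecidableEq ι]
    (A : Matrix ι ι ℝ) {ε : ℝ} (hε : 0 < ε) :
    ∀ᶠ B in 𝓝 A, ‖toEuclideanCLM (n := ι) (𝕜 := ℝ) (B - A)‖ < ε := by
  have hcont : Continuous (toEuclideanCLM (n := ι) (𝕜 := ℝ)) :=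
    LinearMap.continuous_of_finiteDimensional
      (toEuclideanCLM (n := ι) (𝕜 := ℝ)).toAlgEquiv.toLinearMap
  have hA : ContinuousAt (fun B => ‖toEuclideanCLM (n := ι) (𝕜 := ℝ) (B - A)‖) A := by fun_prop
  exact hA.eventually_lt_const (by simpa using hε)

section Subequation

variable {n : ℕ} {F : Set (Matrix (Fin n) (Fin n) ℝ)} {A P : Matrix (Fin n) (Fin n) ℝ}

lemma add_smul_one_mem_symInterior (hF : IsSubequation F) (hA : A ∈ F) {ε : ℝ} (hε : 0 < ε) :
    A + ε • (1 : Matrix (Fin n) (Fin n) ℝ) ∈ symInterior F := by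
  refine ⟨_, eventually_norm_toEuclideanCLM_sub_lt _ hε, fun B hB hBsymm => ?_⟩
  have hsymm : (B - (A + ε • 1)).IsSymm :=
    hBsymm.sub ((hF.1 A hA).add (isSymm_one.smul ε))
  have hB_eq : B = A + (ε • 1 + (B - (A + ε • 1))) := by abel
  rw [hB_eq]
  exact hF.2.2 A hA _ (posSemidef_smul_one_add hsymm (le_of_lt hB))

lemma add_posSemidef_mem_symInterior (hF : IsSubequation F) (hA : A ∈ symInterior F)
    (hP : P.PosSemidef) : A + P ∈ symInterior F := by
  obtain ⟨U, hU, hUF⟩ := hA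
  have hcont : ContinuousAt (fun B => B - P) (A + P) := by fun_prop
  refine ⟨(fun B => B - P) ⁻¹' U, hcont (by simpa using hU), fun B hB hBsymm => ?_⟩
  have hsymm : (B - P).IsSymm := hBsymm.sub (isHermitian_iff_isSymm.1 hP.isHermitian)
  simpa using hF.2.2 _ (hUF _ hB hsymm) P hP

lemma add_posSemidef_mem_dualSubeq (hF : IsSubequation F) (hA : A ∈ dualSubeq F)
    (hP : P.PosSemidef) : A + P ∈ dualSubeq F := by
  refine ⟨hA.1.add (isHermitian_iff_isSymm.1 hP.isHermitian), fun hint => hA.2 ?_⟩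
  simpa using add_posSemidef_mem_symInterior hF hint hP

lemma mem_symInterior_of_smul_mem (hF : IsConeSubequation F) {t : ℝ} (ht : 0 ≤ t)
    (hA : t • A ∈ symInterior F) : A ∈ symInterior F := by
  obtain ⟨U, hU, hUF⟩ := hA
  have hmem : ∀ s : ℝ, 0 < s → ∀ B : Matrix (Fin n) (Fin n) ℝ, s • B ∈ U → B.IsSymm → B ∈ F := by
    intro s hs B hB hsymm
    simpa [smul_smul, hs.ne'] using hF.2 _ (hUF _ hB (hsymm.smul s)) s⁻¹ (by positivity)
  rcases ht.eq_or_lt with rfl | ht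
  · -- A neighbourhood of `0` contains a positive multiple of every symmetric matrix.
    refine ⟨univ, univ_mem, fun B _ hsymm => ?_⟩
    have hcont : Continuous fun s : ℝ => s • B := by fun_prop
    have htend : Tendsto (fun s : ℝ => s • B) (𝓝[>] 0) (𝓝 ((0 : ℝ) • A)) :=
      (hcont.tendsto' 0 _ (by simp)).mono_left nhdsWithin_le_nhds
    obtain ⟨s, hsU, hs⟩ := ((htend.eventually hU).and self_mem_nhdsWithin).exists
    exact hmem s hs B hsU hsymm
  · have hcont : ContinuousAt (fun B => t • B) A := by fun_prop
    exact ⟨(fun B => t • B) ⁻¹' U, hcont hU, hmem t ht⟩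

end Subequation

section RadialMatrix

variable {n : ℕ} {F : Set (Matrix (Fin n) (Fin n) ℝ)} {p α β : ℝ} {e : EucSp n}

/-- The symmetric matrix acting as `α` on `e^⊥` and as `β` on `ℝe`, for a unit vector `e`. Hessians
of radial functions have this form. -/
def radialMatrix (e : EucSp n) (α β : ℝ) : Matrix (Fin n) (Fin n) ℝ :=
  α • (1 - projMat e) + β • projMat e

lemma projMat_posSemidef (e : EucSp n) : (projMat e).PosSemidef :=
  posSemidef_vecMulVec_self_star e.ofLp

lemma radialMatrix_add_smul_one (e : EucSp n) (α β ε : ℝ) :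
    radialMatrix e α β + ε • (1 : Matrix (Fin n) (Fin n) ℝ) = radialMatrix e (α + ε) (β + ε) := by
  unfold radialMatrix
  module

lemma radialMatrix_add_smul_projMat (e : EucSp n) (α β c : ℝ) :
    radialMatrix e α β + c • projMat e = radialMatrix e α (β + c) := by
  unfold radialMatrix
  module

lemma radialMatrix_boundary_mem (hF : IsConeSubequation F) (hp : HasRieszChar F p)
    (he : ‖e‖ = 1) (hα : 0 ≤ α) : radialMatrix e α (-(p - 1) * α) ∈ F := by
  have hmem : 1 - projMat e - (p - 1) • projMat e ∈ F := hF.1.2.1.closure_eq ▸ (hp.2 e he).1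
  convert hF.2 _ hmem α hα using 1
  unfold radialMatrix
  module

lemma radialMatrix_boundary_notMem_symInterior (hF : IsConeSubequation F)
    (hp : HasRieszChar F p) (he : ‖e‖ = 1) (hα : 0 ≤ α) :
    radialMatrix e α (-(p - 1) * α) ∉ symInterior F := by
  refine fun hint => (hp.2 e he).2 (mem_symInterior_of_smul_mem hF hα ?_)
  convert hint using 1
  unfold radialMatrix
  module

lemma radialMatrix_mem (hF : IsConeSubequation F) (hp : HasRieszChar F p) (he : ‖e‖ = 1)
    (hα : 0 ≤ α) (hβ : -(p - 1) * α ≤ β) : radialMatrix e α β ∈ F := by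
  have hmem := hF.1.2.2 _ (radialMatrix_boundary_mem hF hp he hα) _
    ((projMat_posSemidef e).smul (sub_nonneg.2 hβ))
  rwa [radialMatrix_add_smul_projMat, add_sub_cancel] at hmem

lemma radialMatrix_mem_symInterior (hF : IsConeSubequation F) (hp : HasRieszChar F p)
    (he : ‖e‖ = 1) (hα : 0 < α) (hβ : -(p - 1) * α < β) :
    radialMatrix e α β ∈ symInterior F := by
  have hp0 : 0 < p := one_pos.trans_le hp.1
  obtain ⟨ε, hε, hεα, hεβ⟩ : ∃ ε > 0, ε ≤ α ∧ p * ε ≤ β + (p - 1) * α := by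
    have hgap : 0 < (β + (p - 1) * α) / p := div_pos (by linarith) hp0
    exact ⟨min α ((β + (p - 1) * α) / p), by positivity, min_le_left _ _,
      (le_div_iff₀' hp0).1 (min_le_right _ _)⟩
  have hmem : radialMatrix e (α - ε) (β - ε) ∈ F :=
    radialMatrix_mem hF hp he (sub_nonneg.2 hεα) (by linarith)
  simpa only [radialMatrix_add_smul_one, sub_add_cancel] using
    add_smul_one_mem_symInterior hF.1 hmem hε

lemma radialMatrix_notMem (hF : IsConeSubequation F) (hp : HasRieszChar F p) (he : ‖e‖ = 1)
    (hα : 0 ≤ α) (hβ : β < -(p - 1) * α) : radialMatrix e α β ∉ F := by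
  intro hmem
  have hp0 : 0 < p := one_pos.trans_le hp.1
  set ε := (-(p - 1) * α - β) / p with hε
  have hε0 : 0 < ε := div_pos (sub_pos.2 hβ) hp0
  have hboundary : β + ε = -(p - 1) * (α + ε) := by
    rw [hε]
    field_simp
    ring
  apply radialMatrix_boundary_notMem_symInterior hF hp he (add_nonneg hα hε0.le)
  rw [← hboundary, ← radialMatrix_add_smul_one]
  exact add_smul_one_mem_symInterior hF.1 hmem hε0

end RadialMatrix

section SecondDerivativeTest

lemma deriv_deriv_nonneg_of_isLocalMin {f : ℝ → ℝ} {x : ℝ} (hf : ContinuousAt f x)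
    (hmin : IsLocalMin f x) : 0 ≤ deriv (deriv f) x := by
  by_contra! hneg
  have hmax : IsLocalMax f x := isLocalMax_of_deriv_deriv_neg hneg hmin.deriv_eq_zero hf
  have hconst : f =ᶠ[𝓝 x] fun _ => f x := by
    filter_upwards [hmin, hmax] with y hle hge using le_antisymm hge hle
  have hzero : deriv (deriv f) x = 0 := by
    rw [hconst.deriv.deriv_eq]
    simp
  exact hneg.ne hzero

lemma fderiv_fderiv_nonneg_of_isLocalMin {E : Type*} [NormedAddCommGroup E] [NormedSpace ℝ E]
    {w : E → ℝ} {x : E} (hw : ContDiffAt ℝ 2 w x) (hmin : IsLocalMin w x) (v : E) :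
    0 ≤ fderiv ℝ (fderiv ℝ w) x v v := by
  have hline (t : ℝ) : HasDerivAt (fun t : ℝ => x + t • v) v t := by
    simpa using ((hasDerivAt_id t).smul_const v).const_add x
  have hx : x + (0 : ℝ) • v = x := by simp
  have htend : Tendsto (fun t : ℝ => x + t • v) (𝓝 0) (𝓝 x) := by
    simpa only [hx] using (hline 0).continuousAt.tendsto
  have hderiv : deriv (fun t : ℝ => w (x + t • v)) =ᶠ[𝓝 0] fun t => fderiv ℝ w (x + t • v) v := by
    filter_upwards [htend.eventually (hw.eventually (by simp))] with t ht
    have hdiff : DifferentiableAt ℝ w (x + t • v) := ht.differentiableAt (by simp)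
    exact (hdiff.hasFDerivAt.comp_hasDerivAt t (hline t)).deriv
  have hfderiv : HasFDerivAt (fderiv ℝ w) (fderiv ℝ (fderiv ℝ w) x) (x + (0 : ℝ) • v) := by
    rw [hx]
    exact ((hw.fderiv_right (m := 1) (by norm_num)).differentiableAt (by simp)).hasFDerivAt
  have hderiv₂ : deriv (deriv fun t : ℝ => w (x + t • v)) 0 = fderiv ℝ (fderiv ℝ w) x v v := by
    have hcomp : HasDerivAt (fun t : ℝ => fderiv ℝ w (x + t • v)) (fderiv ℝ (fderiv ℝ w) x v) 0 :=
      hfderiv.comp_hasDerivAt (0 : ℝ) (hline 0)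
    rw [hderiv.deriv_eq]
    simpa using (hcomp.clm_apply (hasDerivAt_const (0 : ℝ) v)).deriv
  have hcont : ContinuousAt (fun t : ℝ => w (x + t • v)) 0 := by
    simpa only [ContinuousAt, hx, Function.comp_def] using hw.continuousAt.tendsto.comp htend
  have hmin₀ : IsLocalMin (fun t : ℝ => w (x + t • v)) 0 := by
    filter_upwards [htend.eventually hmin] with t ht
    simpa only [hx] using ht
  exact hderiv₂ ▸ deriv_deriv_nonneg_of_isLocalMin hcont hmin₀

end SecondDerivativeTest

lemma hasFDerivAt_norm_of_ne_zero {E : Type*} [NormedAddCommGroup E] [InnerProductSpace ℝ E]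
    {x : E} (hx : x ≠ 0) : HasFDerivAt (fun y : E => ‖y‖) (‖x‖⁻¹ • innerSL ℝ x) x := by
  have hsqrt := (hasFDerivAt_id (𝕜 := ℝ) x).norm_sq.sqrt (by simpa using hx)
  simp only [id_eq, Real.sqrt_sq (norm_nonneg _)] at hsqrt
  refine hsqrt.congr_fderiv ?_
  ext v
  simp only [one_div, _root_.mul_inv_rev, ContinuousLinearMap.comp_id, _root_.smul_apply,
    coe_innerSL_apply, nsmul_eq_mul, Nat.cast_ofNat, smul_eq_mul]
  ring

section Hessian

variable {n : ℕ} {φ w : EucSp n → ℝ} {x : EucSp n}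

lemma hess_apply (φ : EucSp n → ℝ) (x : EucSp n) (i j : Fin n) :
    hess φ x i j = fderiv ℝ (fderiv ℝ φ) x (EuclideanSpace.single i (1 : ℝ))
      (EuclideanSpace.single j (1 : ℝ)) := by
  simp [hess, iteratedFDeriv_two_apply]

lemma hess_isSymm (hφ : ContDiffAt ℝ 2 φ x) : (hess φ x).IsSymm := by
  ext i j
  rw [transpose_apply, hess_apply, hess_apply]
  exact hφ.isSymmSndFDerivAt (by simp) _ _

lemma dotProduct_hess_mulVec (φ : EucSp n → ℝ) (x v : EucSp n) :
    v.ofLp ⬝ᵥ hess φ x *ᵥ v.ofLp = fderiv ℝ (fderiv ℝ φ) x v v := by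
  have hv : v = ∑ i, v i • EuclideanSpace.single i (1 : ℝ) := by
    ext j
    simp [Finset.sum_apply, Pi.single_apply]
  conv_rhs => rw [hv]
  simp only [map_sum, map_smul, _root_.sum_apply, _root_.smul_apply, dotProduct, mulVec,
    hess_apply, Finset.mul_sum, smul_eq_mul]
  rw [Finset.sum_comm]
  exact Finset.sum_congr rfl fun i _ => Finset.sum_congr rfl fun j _ => by ring

lemma hess_neg (φ : EucSp n → ℝ) (x : EucSp n) : hess (fun y => -φ y) x = -hess φ x := by
  ext i j
  exact DFunLike.congr_fun (iteratedFDeriv_neg_apply (f := φ) (x := x) (i := 2)) _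

lemma hess_sub (hφ : ContDiffAt ℝ 2 φ x) (hw : ContDiffAt ℝ 2 w x) :
    hess (fun y => φ y - w y) x = hess φ x - hess w x := by
  ext i j
  exact DFunLike.congr_fun (iteratedFDeriv_sub_apply hφ hw) _

lemma hess_add_const (φ : EucSp n → ℝ) (c : ℝ) (x : EucSp n) :
    hess (fun y => φ y + c) x = hess φ x := by
  ext i j
  have hfderiv : fderiv ℝ (fun y => φ y + c) = fderiv ℝ φ := funext fun _ => fderiv_add_const c
  rw [hess_apply, hess_apply, hfderiv]

lemma hess_posSemidef_of_isLocalMin (hw : ContDiffAt ℝ 2 w x) (hmin : IsLocalMin w x) :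
    (hess w x).PosSemidef := by
  refine .of_dotProduct_mulVec_nonneg (isHermitian_iff_isSymm.2 (hess_isSymm hw)) fun v => ?_
  rw [star_trivial, dotProduct_hess_mulVec w x (WithLp.toLp 2 v)]
  exact fderiv_fderiv_nonneg_of_isLocalMin hw hmin _

lemma hess_sub_hess_posSemidef (hφ : ContDiffAt ℝ 2 φ x) (hw : ContDiffAt ℝ 2 w x)
    (hle : ∀ᶠ y in 𝓝 x, w y ≤ φ y) (heq : w x = φ x) : (hess φ x - hess w x).PosSemidef := by
  rw [← hess_sub hφ hw]
  refine hess_posSemidef_of_isLocalMin (hφ.sub hw) ?_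
  filter_upwards [hle] with y hy
  linarith

lemma hess_comp_norm {f f₁ : ℝ → ℝ} {f₂ : ℝ} (hx : x ≠ 0)
    (hf : ∀ᶠ t in 𝓝 ‖x‖, HasDerivAt f (f₁ t) t) (hf₁ : HasDerivAt f₁ f₂ ‖x‖) :
    hess (fun y => f ‖y‖) x = radialMatrix (‖x‖⁻¹ • x) (f₁ ‖x‖ / ‖x‖) f₂ := by
  have hnorm : ‖x‖ ≠ 0 := norm_ne_zero_iff.2 hx
  have hgrad : fderiv ℝ (fun y : EucSp n => f ‖y‖) =ᶠ[𝓝 x]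
      fun y => (f₁ ‖y‖ / ‖y‖) • innerSL ℝ y := by
    filter_upwards [continuous_norm.continuousAt.eventually hf, isOpen_ne.mem_nhds hx] with y hy hy0
    refine (hy.comp_hasFDerivAt y (hasFDerivAt_norm_of_ne_zero hy0)).fderiv.trans ?_
    rw [smul_smul, div_eq_mul_inv]
  have hcoef : HasFDerivAt (fun y : EucSp n => f₁ ‖y‖ / ‖y‖)
      (((f₂ * ‖x‖ - f₁ ‖x‖ * 1) / ‖x‖ ^ 2) • ‖x‖⁻¹ • innerSL ℝ x) x :=
    (hf₁.div (hasDerivAt_id ‖x‖) hnorm).comp_hasFDerivAt x (hasFDerivAt_norm_of_ne_zero hx)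
  have hinnerSL : HasFDerivAt (fun y : EucSp n => innerSL ℝ y) (innerSL ℝ) x :=
    (innerSL (E := EucSp n) ℝ).hasFDerivAt
  ext i j
  have hone : innerSL ℝ (EuclideanSpace.single i (1 : ℝ)) (EuclideanSpace.single j (1 : ℝ)) =
      (1 : Matrix (Fin n) (Fin n) ℝ) i j := by
    rw [innerSL_apply_apply, EuclideanSpace.inner_single_left]
    simp [Matrix.one_apply]
  rw [hess_apply, hgrad.fderiv_eq, (hcoef.fun_smul hinnerSL).fderiv]
  simp only [mul_one, _root_.add_apply, _root_.smul_apply, ContinuousLinearMap.smulRight_apply,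
    coe_innerSL_apply, EuclideanSpace.inner_single_right, Real.ringHom_apply, one_mul, smul_eq_mul,
    hone, radialMatrix, projMat, PiLp.smul_apply, smul_of, Matrix.add_apply, Matrix.smul_apply,
    Matrix.sub_apply, of_apply, Pi.smul_apply]
  field_simp
  ring

end Hessian

section RieszKernel

variable {p t : ℝ}

lemma rieszKernel_of_lt_two (hp : p < 2) : rieszKernel p = fun t => t ^ (2 - p) := by
  funext t
  simp [rieszKernel, hp]

lemma rieszKernel_two : rieszKernel 2 = Real.log := by
  funext t
  simp [rieszKernel]

lemma rieszKernel_of_two_lt (hp : 2 < p) : rieszKernel p = fun t => -t ^ (2 - p) := by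
  funext t
  simp [rieszKernel, hp.not_gt, hp.ne']

/-- The derivative of the Riesz kernel on `(0, ∞)`, used to describe Hessians of radial functions.
The constant is `1` instead of `|2 - p|` at `p = 2`, where the kernel is the logarithm. -/
def rieszKernelDeriv (p t : ℝ) : ℝ :=
  (if p = 2 then 1 else |2 - p|) * t ^ (1 - p)

lemma rieszKernelDeriv_pos (p : ℝ) (ht : 0 < t) : 0 < rieszKernelDeriv p t := by
  refine mul_pos ?_ (Real.rpow_pos_of_pos ht _)
  split_ifs with hp
  · exact one_pos
  · exact abs_pos.2 (sub_ne_zero.2 (Ne.symm hp))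

lemma hasDerivAt_rieszKernel (p : ℝ) (ht : 0 < t) :
    HasDerivAt (rieszKernel p) (rieszKernelDeriv p t) t := by
  have hrpow : HasDerivAt (fun t : ℝ => t ^ (2 - p)) ((2 - p) * t ^ (1 - p)) t :=
    (Real.hasDerivAt_rpow_const (Or.inl ht.ne')).congr_deriv (by ring_nf)
  rcases lt_trichotomy p 2 with hp | rfl | hp
  · rw [rieszKernel_of_lt_two hp]
    refine hrpow.congr_deriv ?_
    rw [rieszKernelDeriv, if_neg hp.ne, abs_of_pos (sub_pos.2 hp)]
  · rw [rieszKernel_two]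
    refine (Real.hasDerivAt_log ht.ne').congr_deriv ?_
    rw [rieszKernelDeriv, if_pos rfl, one_mul, show (1 - 2 : ℝ) = -1 by norm_num,
      Real.rpow_neg_one]
  · rw [rieszKernel_of_two_lt hp]
    refine hrpow.neg.congr_deriv ?_
    rw [rieszKernelDeriv, if_neg hp.ne', abs_of_neg (sub_neg.2 hp), neg_mul]

lemma hasDerivAt_rieszKernelDeriv (p : ℝ) (ht : 0 < t) :
    HasDerivAt (rieszKernelDeriv p) ((1 - p) * rieszKernelDeriv p t / t) t := by
  refine ((Real.hasDerivAt_rpow_const (Or.inl ht.ne')).const_mul _).congr_deriv ?_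
  rw [rieszKernelDeriv, Real.rpow_sub_one ht.ne']
  ring

lemma contDiffAt_rieszKernel (p : ℝ) {m : WithTop ℕ∞} (ht : t ≠ 0) :
    ContDiffAt ℝ m (rieszKernel p) t := by
  rcases lt_trichotomy p 2 with hp | rfl | hp
  · rw [rieszKernel_of_lt_two hp]
    exact Real.contDiffAt_rpow_const_of_ne ht
  · rw [rieszKernel_two]
    exact Real.contDiffAt_log.2 ht
  · rw [rieszKernel_of_two_lt hp]
    exact (Real.contDiffAt_rpow_const_of_ne ht).neg

lemma strictMonoOn_rieszKernel (p : ℝ) : StrictMonoOn (rieszKernel p) (Ioi 0) := by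
  refine strictMonoOn_of_deriv_pos (convex_Ioi 0)
    (fun t ht => (hasDerivAt_rieszKernel p ht).continuousAt.continuousWithinAt) fun t ht => ?_
  rw [interior_Ioi] at ht
  rw [(hasDerivAt_rieszKernel p ht).deriv]
  exact rieszKernelDeriv_pos p ht

end RieszKernel

section RadialHessian

variable {n : ℕ} {F : Set (Matrix (Fin n) (Fin n) ℝ)} {p : ℝ} {g : ℝ → ℝ} {x : EucSp n}

lemma contDiffAt_comp_rieszKernel_norm (p : ℝ) (hg : ContDiff ℝ 2 g) (hx : x ≠ 0) :
    ContDiffAt ℝ 2 (fun y => g (rieszKernel p ‖y‖)) x :=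
  hg.contDiffAt.comp x
    ((contDiffAt_rieszKernel p (norm_ne_zero_iff.2 hx)).comp x (contDiffAt_norm ℝ hx))

lemma hess_comp_rieszKernel_norm (p : ℝ) (hg : ContDiff ℝ 2 g) (hx : x ≠ 0) :
    hess (fun y => g (rieszKernel p ‖y‖)) x =
      radialMatrix (‖x‖⁻¹ • x)
        (deriv g (rieszKernel p ‖x‖) * rieszKernelDeriv p ‖x‖ / ‖x‖)
        (deriv (deriv g) (rieszKernel p ‖x‖) * rieszKernelDeriv p ‖x‖ ^ 2 -
          (p - 1) * (deriv g (rieszKernel p ‖x‖) * rieszKernelDeriv p ‖x‖ / ‖x‖)) := by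
  have hnorm : 0 < ‖x‖ := norm_pos_iff.2 hx
  have hg' (s : ℝ) : HasDerivAt g (deriv g s) s := (hg.differentiable (by simp) s).hasDerivAt
  have hg'' (s : ℝ) : HasDerivAt (deriv g) (deriv (deriv g) s) s :=
    ((hg.deriv' (n := 1)).differentiable (by simp) s).hasDerivAt
  refine hess_comp_norm (f := fun t => g (rieszKernel p t))
    (f₁ := fun t => deriv g (rieszKernel p t) * rieszKernelDeriv p t) hx ?_ ?_
  · filter_upwards [lt_mem_nhds hnorm] with t ht
    exact (hg' _).comp t (hasDerivAt_rieszKernel p ht)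
  · refine (((hg'' _).comp ‖x‖ (hasDerivAt_rieszKernel p hnorm)).mul
      (hasDerivAt_rieszKernelDeriv p hnorm)).congr_deriv ?_
    simp only [Function.comp_apply]
    ring

lemma hess_comp_rieszKernel_norm_notMem (hF : IsConeSubequation F) (hp : HasRieszChar F p)
    (hg : ContDiff ℝ 2 g) (hx : x ≠ 0) (hg' : 0 ≤ deriv g (rieszKernel p ‖x‖))
    (hg'' : deriv (deriv g) (rieszKernel p ‖x‖) < 0) :
    hess (fun y => g (rieszKernel p ‖y‖)) x ∉ F := by
  have hnorm : 0 < ‖x‖ := norm_pos_iff.2 hx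
  have hK := rieszKernelDeriv_pos p hnorm
  rw [hess_comp_rieszKernel_norm p hg hx]
  refine radialMatrix_notMem hF hp (norm_smul_inv_norm hx) (by positivity) ?_
  linarith [mul_neg_of_neg_of_pos hg'' (pow_pos hK 2)]

lemma hess_comp_rieszKernel_norm_mem_symInterior (hF : IsConeSubequation F)
    (hp : HasRieszChar F p) (hg : ContDiff ℝ 2 g) (hx : x ≠ 0)
    (hg' : 0 < deriv g (rieszKernel p ‖x‖)) (hg'' : 0 < deriv (deriv g) (rieszKernel p ‖x‖)) :
    hess (fun y => g (rieszKernel p ‖y‖)) x ∈ symInterior F := by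
  have hnorm : 0 < ‖x‖ := norm_pos_iff.2 hx
  have hK := rieszKernelDeriv_pos p hnorm
  rw [hess_comp_rieszKernel_norm p hg hx]
  refine radialMatrix_mem_symInterior hF hp (norm_smul_inv_norm hx) (by positivity) ?_
  linarith [mul_pos hg'' (pow_pos hK 2)]

lemma hess_comp_rieszKernel_norm_mem_diff (hF : IsConeSubequation F) (hp : HasRieszChar F p)
    (hg : ContDiff ℝ 2 g) (hx : x ≠ 0) (hg' : 0 ≤ deriv g (rieszKernel p ‖x‖))
    (hg'' : deriv (deriv g) (rieszKernel p ‖x‖) = 0) :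
    hess (fun y => g (rieszKernel p ‖y‖)) x ∈ F \ symInterior F := by
  have hnorm : 0 < ‖x‖ := norm_pos_iff.2 hx
  have hK := rieszKernelDeriv_pos p hnorm
  rw [hess_comp_rieszKernel_norm p hg hx, hg'', zero_mul, zero_sub, ← neg_mul]
  have hα : 0 ≤ deriv g (rieszKernel p ‖x‖) * rieszKernelDeriv p ‖x‖ / ‖x‖ := by positivity
  exact ⟨radialMatrix_boundary_mem hF hp (norm_smul_inv_norm hx) hα,
    radialMatrix_boundary_notMem_symInterior hF hp (norm_smul_inv_norm hx) hα⟩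

end RadialHessian

section Viscosity

variable {n : ℕ} {F S : Set (Matrix (Fin n) (Fin n) ℝ)} {X K : Set (EucSp n)}

lemma isFSubharmonicOn_congr {u v : EucSp n → EReal} (huv : EqOn u v X) :
    IsFSubharmonicOn S X u ↔ IsFSubharmonicOn S X v := by
  suffices h : ∀ {u v : EucSp n → EReal}, EqOn u v X →
      IsFSubharmonicOn S X u → IsFSubharmonicOn S X v from ⟨h huv, h huv.symm⟩
  rintro u v huv ⟨husc, hlt, hvisc⟩
  refine ⟨fun x hx c hc => ?_, fun x hx => huv hx ▸ hlt x hx, fun x hx φ hφ hle heq => ?_⟩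
  · filter_upwards [husc x hx c ((huv hx).trans_lt hc), self_mem_nhdsWithin] with y hy hyX
    exact huv hyX ▸ hy
  · refine hvisc x hx φ hφ ?_ ((huv hx).trans heq)
    filter_upwards [hle, self_mem_nhdsWithin] with y hy hyX
    exact (huv hyX).trans_le hy

lemma isFHarmonicOn_congr {u v : EucSp n → ℝ} (huv : EqOn u v X) :
    IsFHarmonicOn F X u ↔ IsFHarmonicOn F X v :=
  and_congr (isFSubharmonicOn_congr fun _ hx => by simp only [huv hx])
    (isFSubharmonicOn_congr fun _ hx => by simp only [huv hx])

lemma isFSubharmonicOn_of_hess_mem {w : EucSp n → ℝ}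
    (hS : ∀ A ∈ S, ∀ P : Matrix (Fin n) (Fin n) ℝ, P.PosSemidef → A + P ∈ S) (hX : IsOpen X)
    (hw : ∀ x ∈ X, ContDiffAt ℝ 2 w x) (hmem : ∀ x ∈ X, hess w x ∈ S) :
    IsFSubharmonicOn S X (fun x => (w x : EReal)) := by
  refine ⟨ContinuousOn.upperSemicontinuousOn fun x hx => ?_, fun x _ => EReal.coe_lt_top _,
    fun x hx φ hφ hle heq => ?_⟩
  · exact (continuous_coe_real_ereal.continuousAt.comp (hw x hx).continuousAt).continuousWithinAt
  · rw [hX.nhdsWithin_eq hx] at hle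
    have hpsd : (hess φ x - hess w x).PosSemidef :=
      hess_sub_hess_posSemidef hφ (hw x hx) (hle.mono fun _ => EReal.coe_le_coe_iff.1)
        (EReal.coe_eq_coe_iff.1 heq)
    simpa only [add_sub_cancel] using hS _ (hmem x hx) _ hpsd

lemma isFHarmonicOn_of_hess_mem_diff {w : EucSp n → ℝ} (hF : IsSubequation F) (hX : IsOpen X)
    (hw : ∀ x ∈ X, ContDiffAt ℝ 2 w x) (hmem : ∀ x ∈ X, hess w x ∈ F \ symInterior F) :
    IsFHarmonicOn F X w := by
  refine ⟨isFSubharmonicOn_of_hess_mem hF.2.2 hX hw fun x hx => (hmem x hx).1,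
    isFSubharmonicOn_of_hess_mem (fun A hA P hP => add_posSemidef_mem_dualSubeq hF hA hP) hX
      (fun x hx => (hw x hx).neg) fun x hx => ?_⟩
  rw [hess_neg]
  exact ⟨(hess_isSymm (hw x hx)).neg, by simpa only [neg_neg] using (hmem x hx).2⟩

lemma le_of_isFSubharmonicOn_of_hess_notMem {u w : EucSp n → ℝ}
    (hu : IsFSubharmonicOn S X (fun x => (u x : EReal))) (hK : IsCompact K) (hKX : K ⊆ X)
    (hw : ∀ x ∈ K, ContDiffAt ℝ 2 w x) (hhess : ∀ x ∈ interior K, hess w x ∉ S)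
    (hbdry : ∀ x ∈ frontier K, u x ≤ w x) {x : EucSp n} (hx : x ∈ K) : u x ≤ w x := by
  by_contra! hlt
  have husc : UpperSemicontinuousOn u K := fun y hy c hc =>
    ((hu.1 y (hKX hy) c (EReal.coe_lt_coe_iff.2 hc)).filter_mono (nhdsWithin_mono y hKX)).mono
      fun _ => EReal.coe_lt_coe_iff.1
  have hcont : ContinuousOn (fun y => -w y) K :=
    fun y hy => (hw y hy).continuousAt.neg.continuousWithinAt
  obtain ⟨z, hzK, hmax⟩ :=
    UpperSemicontinuousOn.exists_isMaxOn ⟨x, hx⟩ hK (husc.add hcont.upperSemicontinuousOn)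
  have hle : ∀ y ∈ K, u y - w y ≤ u z - w z := fun y hy => by
    simpa only [mem_ofPred_eq, sub_eq_add_neg] using hmax hy
  have hz : z ∈ interior K := by
    by_contra hint
    linarith [hle x hx, hbdry z ⟨subset_closure hzK, hint⟩]
  refine hhess z hz ?_
  rw [← hess_add_const w (u z - w z)]
  refine hu.2.2 z (hKX hzK) _ ((hw z hzK).add contDiffAt_const) ?_ (by simp)
  filter_upwards [nhdsWithin_le_nhds (mem_interior_iff_mem_nhds.1 hz)] with y hy
  exact EReal.coe_le_coe_iff.2 (by linarith [hle y hy])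

lemma le_of_isFSubharmonicOn_radial [NeZero n] {I : Set ℝ} {f h : ℝ → ℝ} {s t m : ℝ}
    (hf : IsFSubharmonicOn S {x : EucSp n | ‖x‖ ∈ I} (fun x => (f ‖x‖ : EReal)))
    (hI : Icc s t ⊆ I)
    (hh : ∀ x : EucSp n, ‖x‖ ∈ Icc s t → ContDiffAt ℝ 2 (fun y : EucSp n => h ‖y‖) x)
    (hhess : ∀ x : EucSp n, ‖x‖ ∈ Icc s t → hess (fun y => h ‖y‖) x ∉ S)
    (hs : f s ≤ h s) (ht : f t ≤ h t) (hm : m ∈ Icc s t) (hm0 : 0 ≤ m) : f m ≤ h m := by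
  set shell : Set (EucSp n) := {x | ‖x‖ ∈ Icc s t}
  have hcompact : IsCompact shell := by
    refine Metric.isCompact_of_isClosed_isBounded (isClosed_Icc.preimage continuous_norm) ?_
    exact Metric.isBounded_closedBall.subset fun x hx => mem_closedBall_zero_iff.2 hx.2
  have hfrontier : ∀ x ∈ frontier shell, f ‖x‖ ≤ h ‖x‖ := fun x hx => by
    have hx' : ‖x‖ ∈ frontier (Icc s t) := continuous_norm.frontier_preimage_subset _ hx
    rw [frontier_Icc (hm.1.trans hm.2)] at hx'
    rcases hx' with hx' | hx' <;> rwa [hx']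
  obtain ⟨x, hx⟩ := exists_norm_eq (EucSp n) hm0
  have hle := le_of_isFSubharmonicOn_of_hess_notMem (x := x) hf hcompact (fun x hx => hI hx) hh
    (fun x hx => hhess x (interior_subset (s := shell) hx)) hfrontier (hx ▸ hm : ‖x‖ ∈ Icc s t)
  rwa [hx] at hle

end Viscosity

section ChordParabola

variable {s₀ s₁ y₀ y₁ γ s : ℝ}

/-- The parabola through `(s₀, y₀)` and `(s₁, y₁)` with second derivative `2 * γ`: the chord for
`γ = 0`, and a barrier above it for `γ < 0` and below it for `γ > 0`. -/
def chordParabola (s₀ s₁ y₀ y₁ γ s : ℝ) : ℝ :=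
  y₀ + (y₁ - y₀) / (s₁ - s₀) * (s - s₀) + γ * ((s - s₀) * (s - s₁))

lemma chordParabola_left (s₀ s₁ y₀ y₁ γ : ℝ) : chordParabola s₀ s₁ y₀ y₁ γ s₀ = y₀ := by
  simp [chordParabola]

lemma chordParabola_right (hs : s₀ ≠ s₁) (y₀ y₁ γ : ℝ) :
    chordParabola s₀ s₁ y₀ y₁ γ s₁ = y₁ := by
  simp [chordParabola, div_mul_cancel₀ _ (sub_ne_zero.2 hs.symm)]

lemma contDiff_chordParabola {m : WithTop ℕ∞} (s₀ s₁ y₀ y₁ γ : ℝ) :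
    ContDiff ℝ m (chordParabola s₀ s₁ y₀ y₁ γ) := by
  unfold chordParabola
  fun_prop

lemma deriv_chordParabola (s₀ s₁ y₀ y₁ γ : ℝ) :
    deriv (chordParabola s₀ s₁ y₀ y₁ γ) =
      fun s => (y₁ - y₀) / (s₁ - s₀) + γ * (2 * s - s₀ - s₁) := by
  funext s
  have hsub (c : ℝ) : HasDerivAt (fun s => s - c) 1 s := (hasDerivAt_id s).sub_const c
  refine ((((hsub s₀).const_mul _).const_add y₀).add
    (((hsub s₀).mul (hsub s₁)).const_mul γ)).deriv.trans ?_
  ring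

lemma deriv_deriv_chordParabola (s₀ s₁ y₀ y₁ γ s : ℝ) :
    deriv (deriv (chordParabola s₀ s₁ y₀ y₁ γ)) s = 2 * γ := by
  rw [deriv_chordParabola]
  refine ((((((hasDerivAt_id s).const_mul 2).sub_const s₀).sub_const s₁).const_mul γ).const_add
    _).deriv.trans ?_
  ring

lemma deriv_chordParabola_pos (hs : s ∈ Icc s₀ s₁)
    (hγ : |γ| * (s₁ - s₀) < (y₁ - y₀) / (s₁ - s₀)) :
    0 < deriv (chordParabola s₀ s₁ y₀ y₁ γ) s := by
  rw [deriv_chordParabola]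
  have hdist : |2 * s - s₀ - s₁| ≤ s₁ - s₀ :=
    abs_le.2 ⟨by linarith [hs.1], by linarith [hs.2]⟩
  have hbound : |γ * (2 * s - s₀ - s₁)| ≤ |γ| * (s₁ - s₀) := by
    rw [abs_mul]
    gcongr
  linarith [neg_le_of_abs_le hbound]

lemma tendsto_chordParabola (s₀ s₁ y₀ y₁ s : ℝ) :
    Tendsto (fun γ => chordParabola s₀ s₁ y₀ y₁ γ s) (𝓝 0)
      (𝓝 (chordParabola s₀ s₁ y₀ y₁ 0 s)) := by
  refine Continuous.tendsto ?_ 0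
  unfold chordParabola
  fun_prop

end ChordParabola

section Chord

variable {n : ℕ} [NeZero n] {F : Set (Matrix (Fin n) (Fin n) ℝ)} {p : ℝ} {I : Set ℝ}
  {ψ : ℝ → ℝ} {s t m γ : ℝ}

lemma le_chordParabola_of_isFSubharmonicOn (hF : IsConeSubequation F) (hp : HasRieszChar F p)
    (hψ : IsFSubharmonicOn F {x : EucSp n | ‖x‖ ∈ I} (fun x => (ψ ‖x‖ : EReal)))
    (hI : Icc s t ⊆ I) (hs : 0 < s) (hst : s < t) (hm : m ∈ Icc s t) (hγ : γ < 0)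
    (hslope : |γ| * (rieszKernel p t - rieszKernel p s) <
      (ψ t - ψ s) / (rieszKernel p t - rieszKernel p s)) :
    ψ m ≤ chordParabola (rieszKernel p s) (rieszKernel p t) (ψ s) (ψ t) γ (rieszKernel p m) := by
  have hK := strictMonoOn_rieszKernel p
  set g := chordParabola (rieszKernel p s) (rieszKernel p t) (ψ s) (ψ t) γ
  have hg : ContDiff ℝ 2 g := contDiff_chordParabola _ _ _ _ _
  have hpos {r : ℝ} (hr : r ∈ Icc s t) : 0 < r := hs.trans_le hr.1
  refine le_of_isFSubharmonicOn_radial (h := fun r => g (rieszKernel p r)) hψ hI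
    (fun x hx => contDiffAt_comp_rieszKernel_norm p hg (norm_pos_iff.1 (hpos hx)))
    (fun x hx => ?_) (chordParabola_left ..).ge
    (chordParabola_right (hK hs (hs.trans hst) hst).ne ..).ge hm (hpos hm).le
  have hKx : rieszKernel p ‖x‖ ∈ Icc (rieszKernel p s) (rieszKernel p t) :=
    (hK.monotoneOn.mono fun _ => hpos).mapsTo_Icc hx
  refine hess_comp_rieszKernel_norm_notMem hF hp hg (norm_pos_iff.1 (hpos hx))
    (deriv_chordParabola_pos hKx hslope).le ?_
  rw [deriv_deriv_chordParabola]
  linarith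

lemma chordParabola_le_of_isFSubharmonicOn_dualSubeq (hF : IsConeSubequation F)
    (hp : HasRieszChar F p)
    (hψ : IsFSubharmonicOn (dualSubeq F) {x : EucSp n | ‖x‖ ∈ I} (fun x => (-ψ ‖x‖ : ℝ)))
    (hI : Icc s t ⊆ I) (hs : 0 < s) (hst : s < t) (hm : m ∈ Icc s t) (hγ : 0 < γ)
    (hslope : |γ| * (rieszKernel p t - rieszKernel p s) <
      (ψ t - ψ s) / (rieszKernel p t - rieszKernel p s)) :
    chordParabola (rieszKernel p s) (rieszKernel p t) (ψ s) (ψ t) γ (rieszKernel p m) ≤ ψ m := by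
  have hK := strictMonoOn_rieszKernel p
  set g := chordParabola (rieszKernel p s) (rieszKernel p t) (ψ s) (ψ t) γ
  have hg : ContDiff ℝ 2 g := contDiff_chordParabola _ _ _ _ _
  have hpos {r : ℝ} (hr : r ∈ Icc s t) : 0 < r := hs.trans_le hr.1
  refine neg_le_neg_iff.1 <| le_of_isFSubharmonicOn_radial (f := fun r => -ψ r)
    (h := fun r => -g (rieszKernel p r)) hψ hI
    (fun x hx => (contDiffAt_comp_rieszKernel_norm p hg (norm_pos_iff.1 (hpos hx))).neg)
    (fun x hx hdual => ?_) (neg_le_neg (chordParabola_left ..).le)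
    (neg_le_neg (chordParabola_right (hK hs (hs.trans hst) hst).ne ..).le) hm (hpos hm).le
  have hKx : rieszKernel p ‖x‖ ∈ Icc (rieszKernel p s) (rieszKernel p t) :=
    (hK.monotoneOn.mono fun _ => hpos).mapsTo_Icc hx
  rw [hess_neg] at hdual
  refine hdual.2 ?_
  rw [neg_neg]
  refine hess_comp_rieszKernel_norm_mem_symInterior hF hp hg (norm_pos_iff.1 (hpos hx))
    (deriv_chordParabola_pos hKx hslope) ?_
  rw [deriv_deriv_chordParabola]
  linarith

lemma eq_chord_of_isFHarmonicOn (hF : IsConeSubequation F) (hp : HasRieszChar F p)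
    (hψ : IsFHarmonicOn F {x : EucSp n | ‖x‖ ∈ I} (fun x => ψ ‖x‖))
    (hI : Icc s t ⊆ I) (hs : 0 < s) (hst : s < t) (hψst : ψ s < ψ t) (hm : m ∈ Icc s t) :
    ψ m = chordParabola (rieszKernel p s) (rieszKernel p t) (ψ s) (ψ t) 0 (rieszKernel p m) := by
  have hslope : ∀ᶠ γ in 𝓝 (0 : ℝ), |γ| * (rieszKernel p t - rieszKernel p s) <
      (ψ t - ψ s) / (rieszKernel p t - rieszKernel p s) := by
    have hK : rieszKernel p s < rieszKernel p t :=
      strictMonoOn_rieszKernel p hs (hs.trans hst) hst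
    have hcont : ContinuousAt (fun γ : ℝ => |γ| * (rieszKernel p t - rieszKernel p s)) 0 := by
      fun_prop
    exact hcont.eventually_lt_const
      (by simpa using div_pos (sub_pos.2 hψst) (sub_pos.2 hK))
  have hlim := tendsto_chordParabola (rieszKernel p s) (rieszKernel p t) (ψ s) (ψ t)
    (rieszKernel p m)
  apply le_antisymm
  · refine ge_of_tendsto (hlim.mono_left (nhdsWithin_le_nhds (s := Iio 0))) ?_
    filter_upwards [nhdsWithin_le_nhds hslope, self_mem_nhdsWithin] with γ hγ hγ0
    exact le_chordParabola_of_isFSubharmonicOn hF hp hψ.1 hI hs hst hm hγ0 hγ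
  · refine le_of_tendsto (hlim.mono_left (nhdsWithin_le_nhds (s := Ioi 0))) ?_
    filter_upwards [nhdsWithin_le_nhds hslope, self_mem_nhdsWithin] with γ hγ hγ0
    exact chordParabola_le_of_isFSubharmonicOn_dualSubeq hF hp hψ.2 hI hs hst hm hγ0 hγ

lemma collinear_of_isFHarmonicOn (hF : IsConeSubequation F) (hp : HasRieszChar F p)
    (hψ : IsFHarmonicOn F {x : EucSp n | ‖x‖ ∈ I} (fun x => ψ ‖x‖)) (hmono : MonotoneOn ψ I)
    (hI : Icc s t ⊆ I) (hs : 0 < s) (hst : s < t) (hm : m ∈ Icc s t) :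
    (ψ m - ψ s) * (rieszKernel p t - rieszKernel p s) =
      (ψ t - ψ s) * (rieszKernel p m - rieszKernel p s) := by
  have hsI := hI (left_mem_Icc.2 hst.le)
  have htI := hI (right_mem_Icc.2 hst.le)
  rcases (hmono hsI htI hst.le).eq_or_lt with heq | hlt
  · have hψm : ψ m = ψ s :=
      le_antisymm ((hmono (hI hm) htI hm.2).trans_eq heq.symm) (hmono hsI (hI hm) hm.1)
    rw [hψm, heq, sub_self, zero_mul, zero_mul]
  · have hK : rieszKernel p t - rieszKernel p s ≠ 0 :=
      sub_ne_zero.2 (strictMonoOn_rieszKernel p hs (hs.trans hst) hst).ne'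
    rw [eq_chord_of_isFHarmonicOn hF hp hψ hI hs hst hlt hm, chordParabola]
    field_simp
    ring

end Chord

lemma exists_eq_mul_add_of_collinear {α 𝕜 : Type*} [LinearOrder α] [Field 𝕜] [LinearOrder 𝕜]
    [IsStrictOrderedRing 𝕜] {I : Set α} {k ψ : α → 𝕜} (hk : StrictMonoOn k I)
    (hψ : MonotoneOn ψ I)
    (hcol : ∀ s ∈ I, ∀ t ∈ I, s < t → ∀ m ∈ I, m ∈ Icc s t →
      (ψ m - ψ s) * (k t - k s) = (ψ t - ψ s) * (k m - k s)) :
    ∃ Θ C : 𝕜, 0 ≤ Θ ∧ ∀ t ∈ I, ψ t = Θ * k t + C := by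
  rcases I.subsingleton_or_nontrivial with hsub | hnontriv
  · rcases hsub.eq_empty_or_singleton with rfl | ⟨r, rfl⟩
    · exact ⟨0, 0, le_rfl, by simp⟩
    · exact ⟨0, ψ r, le_rfl, by simp⟩
  obtain ⟨s, hs, t, ht, hst⟩ := hnontriv.exists_lt
  have hkst : 0 < k t - k s := sub_pos.2 (hk hs ht hst)
  -- The identity `hcol` is the vanishing of an alternating determinant in the three points, so it
  -- holds whichever of them lies in the middle.
  have hcol' : ∀ r ∈ I, (ψ r - ψ s) * (k t - k s) = (ψ t - ψ s) * (k r - k s) := by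
    intro r hr
    rcases lt_or_ge r s with hrs | hsr
    · linarith [hcol r hr t ht (hrs.trans hst) s hs ⟨hrs.le, hst.le⟩]
    rcases le_or_gt r t with hrt | htr
    · exact hcol s hs t ht hst r hr ⟨hsr, hrt⟩
    · linarith [hcol s hs r hr (hst.trans htr) t ht ⟨hst.le, htr.le⟩]
  refine ⟨(ψ t - ψ s) / (k t - k s), ψ s - (ψ t - ψ s) / (k t - k s) * k s,
    div_nonneg (sub_nonneg.2 (hψ hs ht hst.le)) hkst.le, fun r hr => ?_⟩
  field_simp
  linarith [hcol' r hr]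

lemma isFHarmonicOn_rieszKernel {n : ℕ} {F : Set (Matrix (Fin n) (Fin n) ℝ)} {p Θ : ℝ}
    {X : Set (EucSp n)} (hF : IsConeSubequation F) (hp : HasRieszChar F p) (hX : IsOpen X)
    (hX0 : 0 ∉ X) (hΘ : 0 ≤ Θ) (C : ℝ) :
    IsFHarmonicOn F X (fun x => Θ * rieszKernel p ‖x‖ + C) := by
  have hg : ContDiff ℝ 2 fun s => Θ * s + C := by fun_prop
  have hderiv : deriv (fun s => Θ * s + C) = fun _ => Θ := by
    funext s
    simp
  have hne : ∀ x ∈ X, x ≠ 0 := fun x hx => ne_of_mem_of_not_mem hx hX0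
  refine isFHarmonicOn_of_hess_mem_diff hF.1 hX (fun x hx => ?_) fun x hx => ?_
  · exact contDiffAt_comp_rieszKernel_norm (g := fun s => Θ * s + C) p hg (hne x hx)
  · exact hess_comp_rieszKernel_norm_mem_diff (g := fun s => Θ * s + C) hF hp hg (hne x hx)
      (by simpa only [hderiv] using hΘ) (by simp only [hderiv, deriv_const])

theorem stmt3_general {n : ℕ} [NeZero n] {p : ℝ} {F : Set (Matrix (Fin n) (Fin n) ℝ)}
    (hF : IsConeSubequation F) (hchar : HasRieszChar F p) {I : Set ℝ} (hI : IsOpen I)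
    (hconn : I.OrdConnected) (hpos : I ⊆ Ioi 0) {ψ : ℝ → ℝ} (hψ : MonotoneOn ψ I) :
    IsFHarmonicOn F {x : EucSp n | ‖x‖ ∈ I} (fun x => ψ ‖x‖) ↔
      ∃ Θ C : ℝ, 0 ≤ Θ ∧ ∀ t ∈ I, ψ t = Θ * rieszKernel p t + C := by
  constructor
  · intro hharm
    refine exists_eq_mul_add_of_collinear ((strictMonoOn_rieszKernel p).mono hpos) hψ ?_
    intro s hs t ht hst m _ hm
    exact collinear_of_isFHarmonicOn hF hchar hharm hψ (hconn.out hs ht) (hpos hs) hst hm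
  · rintro ⟨Θ, C, hΘ, hψ_eq⟩
    have h0 : (0 : EucSp n) ∉ {x : EucSp n | ‖x‖ ∈ I} := fun h0 =>
      (hpos h0).ne' norm_zero
    refine (isFHarmonicOn_congr fun x hx => hψ_eq ‖x‖ hx).2 ?_
    exact isFHarmonicOn_rieszKernel hF hchar (hI.preimage continuous_norm) h0 hΘ C

/-- Increasing radial `F`-harmonics on an annulus are exactly `Θ·K_p(|x|) + C`
with `Θ ≥ 0`. -/
theorem stmt3 (n : ℕ) (hn : 1 ≤ n) (p : ℝ)
    (F : Set (Matrix (Fin n) (Fin n) ℝ))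
    (hF : IsConeSubequation F) (hST : STInvariant F) (hchar : HasRieszChar F p)
    (a : ℝ) (b : EReal) (ha : 0 ≤ a) (hab : (a : EReal) < b)
    (ψ : ℝ → ℝ) (hψ : MonotoneOn ψ {t : ℝ | a < t ∧ (t : EReal) < b}) :
    IsFHarmonicOn F {x : EucSp n | a < ‖x‖ ∧ ((‖x‖ : ℝ) : EReal) < b}
        (fun x => ψ ‖x‖) ↔
      ∃ Θ C : ℝ, 0 ≤ Θ ∧ ∀ t : ℝ, a < t → ((t : ℝ) : EReal) < b →
        ψ t = Θ * rieszKernel p t + C := by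
  have : NeZero n := ⟨Nat.one_le_iff_ne_zero.1 hn⟩
  have hopen : IsOpen {t : ℝ | a < t ∧ (t : EReal) < b} :=
    isOpen_Ioi.inter (isOpen_Iio.preimage continuous_coe_real_ereal)
  have hconn : {t : ℝ | a < t ∧ (t : EReal) < b}.OrdConnected :=
    ordConnected_Ioi.inter (ordConnected_Iio.preimage_mono EReal.coe_strictMono.monotone)
  simpa only [mem_ofPred_eq, and_imp] using
    stmt3_general hF hchar hopen hconn (fun t ht => ha.trans_lt ht.1) hψ

end
end

section
/- Let n ≥ 2 and let F ⊆ Sym²(ℝⁿ) be an ST-invariant cone subequation with finite increasing Riesz characteristic p (i.e. P_{e⊥} − (p−1)P_e ∈ ∂F for unit e) and finite decreasing Riesz characteristic q (i.e. −P_{e⊥} + (q−1)P_e ∈ ∂F for unit e). Then (p−1)(q−1) ≥ 1. -/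
open Set Filter Topology Matrix

noncomputable section

/-!
Take orthonormal `e`, `f` and write `A = P_{e⊥} - (p - 1) P_e`, `B = -P_{f⊥} + (q - 1) P_f`. On
the orthogonal decomposition `ℝe ⊕ ℝf ⊕ {e, f}⊥` the matrix `A - t B` acts by the scalars
`t - (p - 1)`, `1 - t (q - 1)` and `1 + t`. If `(p - 1) (q - 1) < 1`, some `t ≥ 0` makes all three
positive, so `A` exceeds `t B ∈ F` by a positive definite matrix and lies in the interior of `F`.
-/

section PosDef

variable {𝕜 ι : Type*} [RCLike 𝕜]

open scoped ComplexOrder MatrixOrder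

lemma posDef_of_re_dotProduct_mulVec_pos_of_norm_eq_one [Fintype ι] {A : Matrix ι ι 𝕜}
    (hA : A.IsHermitian)
    (h : ∀ u : ι → 𝕜, ‖u‖ = 1 → 0 < RCLike.re (star u ⬝ᵥ (A *ᵥ u))) : A.PosDef := by
  refine .of_dotProduct_mulVec_pos hA fun x hx => ?_
  rw [RCLike.pos_iff]
  refine ⟨?_, hA.im_star_dotProduct_mulVec_self x⟩
  set r : ℝ := ‖x‖⁻¹
  have hunit : ‖r • x‖ = 1 := by simp [r, norm_smul, hx]
  have hscale : star (r • x) ⬝ᵥ (A *ᵥ (r • x)) = (r ^ 2) • (star x ⬝ᵥ (A *ᵥ x)) := by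
    simp [mulVec_smul, pow_two, smul_smul]
  have hpos := h _ hunit
  rw [hscale, RCLike.smul_re] at hpos
  exact pos_of_mul_pos_right hpos (sq_nonneg r)

lemma eventually_posDef_of_isHermitian [Finite ι] {A : Matrix ι ι 𝕜} (hA : A.PosDef) :
    ∀ᶠ B in 𝓝 A, B.IsHermitian → B.PosDef := by
  cases nonempty_fintype ι
  have hcont : Continuous fun z : Matrix ι ι 𝕜 × (ι → 𝕜) =>
      RCLike.re (star z.2 ⬝ᵥ (z.1 *ᵥ z.2)) := by fun_prop
  have hpos : ∀ᶠ B in 𝓝 A, ∀ u ∈ Metric.sphere (0 : ι → 𝕜) 1,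
      0 < RCLike.re (star u ⬝ᵥ (B *ᵥ u)) :=
    (isCompact_sphere 0 1).eventually_forall_of_forall_eventually fun u hu =>
      hcont.continuousAt.eventually_const_lt
        (hA.re_dotProduct_pos (Metric.ne_of_mem_sphere hu one_ne_zero))
  filter_upwards [hpos] with B hB hherm
  exact posDef_of_re_dotProduct_mulVec_pos_of_norm_eq_one hherm fun u hu =>
    hB u (mem_sphere_zero_iff_norm.2 hu)

lemma posDef_smul_add_smul_add_smul_one_sub_sub [Fintype ι] [DecidableEq ι]
    {P Q : Matrix ι ι 𝕜} (hP : IsStarProjection P) (hQ : IsStarProjection Q) (hPQ : P * Q = 0)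
    {a b c : ℝ} (ha : 0 < a) (hb : 0 < b) (hc : 0 < c) :
    (a • P + b • Q + c • (1 - P - Q)).PosDef := by
  have hR : IsStarProjection (1 - P - Q) := by
    rw [sub_sub]; exact (hP.add hQ hPQ).one_sub
  set m := min a (min b c)
  have hm : 0 < m := by positivity
  have hma : 0 ≤ a - m := sub_nonneg.2 (min_le_left _ _)
  have hmb : 0 ≤ b - m := sub_nonneg.2 ((min_le_right _ _).trans (min_le_left _ _))
  have hmc : 0 ≤ c - m := sub_nonneg.2 ((min_le_right _ _).trans (min_le_right _ _))
  have hsplit : a • P + b • Q + c • (1 - P - Q) =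
      m • 1 + ((a - m) • P + (b - m) • Q + (c - m) • (1 - P - Q)) := by module
  rw [hsplit]
  exact (PosDef.one.smul hm).add_posSemidef
    (((hP.nonneg.posSemidef.smul hma).add (hQ.nonneg.posSemidef.smul hmb)).add
      (hR.nonneg.posSemidef.smul hmc))

end PosDef

lemma projMat_eq_vecMulVec {n : ℕ} (e : EucSp n) : projMat e = vecMulVec e e := rfl

lemma projMat_mul_projMat {n : ℕ} (e f : EucSp n) :
    projMat e * projMat f = inner ℝ e f • vecMulVec e f := by
  simp [projMat_eq_vecMulVec, vecMulVec_mul_vecMulVec, EuclideanSpace.inner_eq_star_dotProduct,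
    dotProduct_comm]

lemma isStarProjection_projMat {n : ℕ} {e : EucSp n} (he : ‖e‖ = 1) :
    IsStarProjection (projMat e) where
  isIdempotentElem := by
    rw [IsIdempotentElem, projMat_mul_projMat, real_inner_self_eq_norm_sq, he, one_pow, one_smul,
      projMat_eq_vecMulVec]
  isSelfAdjoint := by
    simp [projMat_eq_vecMulVec, IsSelfAdjoint, star_eq_conjTranspose]

lemma IsSubequation.add_posDef_mem_symInterior {n : ℕ} {F : Set (Matrix (Fin n) (Fin n) ℝ)}
    (hF : IsSubequation F) {A P : Matrix (Fin n) (Fin n) ℝ} (hA : A ∈ F) (hP : P.PosDef) :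
    A + P ∈ symInterior F := by
  obtain ⟨hsymm, -, hpos⟩ := hF
  have htendsto : Tendsto (fun B => B - A) (𝓝 (A + P)) (𝓝 P) := by
    simpa using (continuous_sub_right A).tendsto (A + P)
  refine ⟨_, htendsto.eventually (eventually_posDef_of_isHermitian hP), fun B hB hBsymm => ?_⟩
  have hdiff : (B - A).PosDef := hB (isHermitian_iff_isSymm.2 (hBsymm.sub (hsymm A hA)))
  simpa using hpos A hA _ hdiff.posSemidef

lemma exists_nonneg_gt_mul_lt_one {K : Type*} [Field K] [LinearOrder K] [IsStrictOrderedRing K]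
    {a b : K} (hab : a * b < 1) : ∃ t, 0 ≤ t ∧ a < t ∧ t * b < 1 := by
  suffices ∃ t, max a 0 < t ∧ t * b < 1 by
    obtain ⟨t, hmax, htb⟩ := this
    exact ⟨t, (le_max_right a 0).trans hmax.le, (le_max_left a 0).trans_lt hmax, htb⟩
  rcases le_or_gt b 0 with hb | hb
  · refine ⟨max a 0 + 1, lt_add_one _, ?_⟩
    exact (mul_nonpos_of_nonneg_of_nonpos (by positivity) hb).trans_lt one_pos
  · have hmax : max a 0 < 1 / b := max_lt ((lt_div_iff₀ hb).2 hab) (one_div_pos.2 hb)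
    obtain ⟨t, hat, htb⟩ := exists_between hmax
    exact ⟨t, hat, (lt_div_iff₀ hb).1 htb⟩

theorem stmt5_general {n : ℕ} {p q : ℝ} {F : Set (Matrix (Fin n) (Fin n) ℝ)}
    (hF : IsConeSubequation F) {e f : EucSp n} (he : ‖e‖ = 1) (hf : ‖f‖ = 1)
    (hef : inner ℝ e f = 0)
    (hp : (1 - projMat e) - (p - 1) • projMat e ∉ symInterior F)
    (hq : -(1 - projMat f) + (q - 1) • projMat f ∈ F) :
    1 ≤ (p - 1) * (q - 1) := by
  by_contra! hlt
  obtain ⟨t, ht, hpt, hqt⟩ := exists_nonneg_gt_mul_lt_one hlt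
  have hgap : ((t - (p - 1)) • projMat e + (1 - t * (q - 1)) • projMat f +
      (1 + t) • (1 - projMat e - projMat f)).PosDef :=
    posDef_smul_add_smul_add_smul_one_sub_sub (isStarProjection_projMat he)
      (isStarProjection_projMat hf) (by rw [projMat_mul_projMat, hef, zero_smul]) (sub_pos.2 hpt)
      (sub_pos.2 hqt) (by positivity)
  have hint := hF.1.add_posDef_mem_symInterior (hF.2 _ hq t ht) hgap
  exact hp (by convert hint using 1; module)

/-- The two Riesz characteristics of an ST-invariant cone subequation satisfy
`(p−1)(q−1) ≥ 1`. -/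
theorem stmt5 (n : ℕ) (hn : 2 ≤ n) (p q : ℝ)
    (F : Set (Matrix (Fin n) (Fin n) ℝ))
    (hF : IsConeSubequation F) (hST : STInvariant F)
    (hp : HasRieszChar F p) (hq : HasDualRieszChar F q) :
    1 ≤ (p - 1) * (q - 1) := by
  have hb := (EuclideanSpace.basisFun (Fin n) ℝ).orthonormal
  exact stmt5_general hF (hb.1 ⟨0, by omega⟩) (hb.1 ⟨1, by omega⟩) (hb.2 (by simp))
    (hp.2 _ (hb.1 _)).2 (hF.1.2.1.closure_eq ▸ (hq.2 _ (hb.1 _)).1)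

end
end

section
/- Let F ⊆ Sym²(ℝⁿ) be an ST-invariant cone subequation with finite Riesz characteristic. (i) If u is F-subharmonic on the annulus A(a, b) = {x ∈ ℝⁿ : a < |x| < b} (0 ≤ a < b), then the radial function x ↦ M(u, |x|), where M(u, t) = sup_{|y| = t} u(y), is F-subharmonic on A(a, b). (ii) If u is F-subharmonic on the ball {x : |x| < R}, then in addition t ↦ M(u, t) is nondecreasing on [0, R). -/
open Set Filter Topology Matrix

noncomputable section

/-- The spherical maximum `M(u, t) = sup_{|y| = t} u(y)`. -/
def sphSup {n : ℕ} (u : EucSp n → EReal) (t : ℝ) : EReal :=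
  sSup (u '' {y : EucSp n | ‖y‖ = t})

/-!
If `φ` touches `x ↦ sphSup u ‖x‖` from above at `x₀`, choose a point `y₀` where `u` attains its
maximum over the sphere through `x₀`, and a rotation `g` of the transitive group with `g y₀ = x₀`.
Then `φ ∘ g` touches `u` from above at `y₀`, so its Hessian `gᵀ (D²φ(x₀)) g` lies in `F`, and
invariance gives `D²φ(x₀) ∈ F`.

Monotonicity is the maximum principle on balls. It holds as soon as `F` contains no negative
multiple of the identity: otherwise `u + ε‖·‖²` would have an interior maximum for some small `ε`,
where a function with Hessian `-2ε I` touches `u` from above. A cone subequation containing a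
negative multiple of the identity contains every symmetric matrix, and a finite Riesz
characteristic excludes this by exhibiting a boundary point.
-/

section Hessian

variable {n : ℕ}

theorem iteratedFDeriv_comp_clm_of_contDiffAt {𝕜 E F G : Type*} [NontriviallyNormedField 𝕜]
    [NormedAddCommGroup E] [NormedSpace 𝕜 E] [NormedAddCommGroup F] [NormedSpace 𝕜 F]
    [NormedAddCommGroup G] [NormedSpace 𝕜 G] (L : G →L[𝕜] E) {f : E → F} {x : G} {k : ℕ}
    (hf : ContDiffAt 𝕜 k f (L x)) :
    iteratedFDeriv 𝕜 k (f ∘ L) x =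
      (iteratedFDeriv 𝕜 k f (L x)).compContinuousLinearMap fun _ => L := by
  obtain ⟨s, hs, hxs, hfs⟩ := hf.contDiffWithinAt.contDiffOn' le_rfl (by simp) (s := univ)
  simp only [insert_eq_of_mem (mem_univ _), univ_inter] at hfs
  have hLs : IsOpen (L ⁻¹' s) := hs.preimage L.continuous
  rw [← iteratedFDerivWithin_of_isOpen k hLs hxs, ← iteratedFDerivWithin_of_isOpen k hs hxs]
  exact L.iteratedFDerivWithin_comp_right hfs hs.uniqueDiffOn hLs.uniqueDiffOn hxs le_rfl

theorem iteratedFDeriv_two_eq_dotProduct_hess (φ : EucSp n → ℝ) (x v w : EucSp n) :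
    iteratedFDeriv ℝ 2 φ x ![v, w] = v ⬝ᵥ hess φ x *ᵥ w := by
  have expand (z : EucSp n) : z = ∑ i, z i • EuclideanSpace.single i (1 : ℝ) := by
    simpa using ((EuclideanSpace.basisFun (Fin n) ℝ).sum_repr z).symm
  conv_lhs => rw [expand v, expand w]
  simp only [iteratedFDeriv_two_apply, Matrix.cons_val_zero, Matrix.cons_val_one, map_sum, map_smul,
    _root_.sum_apply, _root_.smul_apply, smul_eq_mul, dotProduct, mulVec, hess, of_apply,
    Finset.mul_sum]
  rw [Finset.sum_comm]
  refine Finset.sum_congr rfl fun i _ => Finset.sum_congr rfl fun j _ => ?_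
  ring

theorem hess_comp_toEuclideanLin (g : Matrix (Fin n) (Fin n) ℝ) {φ : EucSp n → ℝ} {y : EucSp n}
    (hφ : ContDiffAt ℝ 2 φ (toEuclideanLin g y)) :
    hess (φ ∘ toEuclideanLin g) y = gᵀ * hess φ (toEuclideanLin g y) * g := by
  ext i j
  let L : EucSp n →L[ℝ] EucSp n := toEuclideanCLM (𝕜 := ℝ) g
  have hcol (k : Fin n) : (L (EuclideanSpace.single k 1)).ofLp = gᵀ k :=
    mulVec_single_one g k
  have hvec : (fun k => L (![EuclideanSpace.single i 1, EuclideanSpace.single j 1] k)) =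
      ![L (EuclideanSpace.single i 1), L (EuclideanSpace.single j 1)] := by
    ext1 k
    fin_cases k <;> rfl
  change iteratedFDeriv ℝ 2 (φ ∘ L) y _ = _
  rw [iteratedFDeriv_comp_clm_of_contDiffAt L hφ,
    ContinuousMultilinearMap.compContinuousLinearMap_apply, hvec,
    iteratedFDeriv_two_eq_dotProduct_hess, hcol, hcol, mul_mul_apply]
  rfl

theorem hess_const_sub_mul_norm_sq (c ε : ℝ) (x : EucSp n) :
    hess (fun z => c - ε * ‖z‖ ^ 2) x = (-(2 * ε)) • (1 : Matrix (Fin n) (Fin n) ℝ) := by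
  have hfderiv : fderiv ℝ (fun z : EucSp n => c - ε * ‖z‖ ^ 2) =
      ⇑((-(2 * ε)) • innerSL ℝ (E := EucSp n)) := by
    ext z v
    rw [fderiv_const_sub, fderiv_const_mul (hasStrictFDerivAt_norm_sq z).differentiableAt,
      fderiv_norm_sq_apply]
    simp only [_root_.neg_apply, _root_.smul_apply, coe_innerSL_apply, smul_eq_mul, nsmul_eq_mul,
      Nat.cast_ofNat, neg_smul]
    ring
  ext i j
  have hinner : inner ℝ (EuclideanSpace.single i (1 : ℝ)) (EuclideanSpace.single j 1) =
      (1 : Matrix (Fin n) (Fin n) ℝ) i j := by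
    simp [Matrix.one_apply, EuclideanSpace.inner_single_left]
  rw [Matrix.smul_apply, ← hinner, hess, of_apply, iteratedFDeriv_two_apply, hfderiv,
    ContinuousLinearMap.fderiv]
  rfl

end Hessian

section Rotations

variable {n : ℕ} {F : Set (Matrix (Fin n) (Fin n) ℝ)}

theorem norm_toEuclideanLin_of_mem_orthogonalGroup {g : Matrix (Fin n) (Fin n) ℝ}
    (hg : g ∈ orthogonalGroup (Fin n) ℝ) (x : EucSp n) : ‖toEuclideanLin g x‖ = ‖x‖ :=
  ContinuousLinearMap.norm_map_of_mem_unitary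
    (Unitary.map_mem (toEuclideanCLM (n := Fin n) (𝕜 := ℝ)) hg) x

theorem STInvariant.exists_rotation (hF : STInvariant F) {x y : EucSp n} (hxy : ‖x‖ = ‖y‖) :
    ∃ g ∈ orthogonalGroup (Fin n) ℝ, toEuclideanLin g x = y ∧
      ∀ A, gᵀ * A * g ∈ F → A ∈ F := by
  obtain ⟨G, -, hGO, h1, -, hinv, htrans, hGF⟩ := hF
  obtain ⟨g, hg, hgx⟩ : ∃ g ∈ G, toEuclideanLin g x = y := by
    rcases eq_or_ne x 0 with rfl | hx
    · obtain rfl : y = 0 := norm_eq_zero.1 (by simpa using hxy.symm)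
      exact ⟨1, h1, map_zero _⟩
    · have hy : y ≠ 0 := norm_ne_zero_iff.1 (hxy ▸ norm_ne_zero_iff.2 hx)
      obtain ⟨g, hg, hgx⟩ := htrans (‖x‖⁻¹ • x) (‖y‖⁻¹ • y)
        (norm_smul_inv_norm hx) (norm_smul_inv_norm hy)
      rw [map_smul, hxy] at hgx
      exact ⟨g, hg, smul_right_injective _ (inv_ne_zero (norm_ne_zero_iff.2 hy)) hgx⟩
  have hggT : g * gᵀ = 1 := (mem_orthogonalGroup_iff _ _).1 (hGO hg)
  refine ⟨g, hGO hg, hgx, fun A hA => ?_⟩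
  have hconj := hGF _ (hinv g hg) _ hA
  rw [inv_eq_right_inv hggT, transpose_transpose] at hconj
  rwa [show g * (gᵀ * A * g) * gᵀ = (g * gᵀ) * A * (g * gᵀ) by simp only [Matrix.mul_assoc],
    hggT, Matrix.one_mul, Matrix.mul_one] at hconj

end Rotations

section SphericalMaximum

variable {n : ℕ} {u : EucSp n → EReal}

theorem le_sphSup (u : EucSp n → EReal) (y : EucSp n) : u y ≤ sphSup u ‖y‖ :=
  le_sSup ⟨y, rfl, rfl⟩

theorem exists_eq_sphSup {t : ℝ} (hne : (Metric.sphere (0 : EucSp n) t).Nonempty)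
    (hu : UpperSemicontinuousOn u (Metric.sphere 0 t)) :
    ∃ y, ‖y‖ = t ∧ u y = sphSup u t := by
  obtain ⟨y, hy, hmax⟩ := hu.exists_isMaxOn hne (isCompact_sphere 0 t)
  rw [mem_sphere_zero_iff_norm] at hy
  refine ⟨y, hy, le_antisymm (hy ▸ le_sphSup u y) (sSup_le ?_)⟩
  rintro _ ⟨z, hz, rfl⟩
  exact hmax (mem_sphere_zero_iff_norm.2 hz)

-- The norm is a closed map, so a neighbourhood of a sphere contains all nearby spheres.
theorem upperSemicontinuousOn_sphSup {I : Set ℝ} (hu : UpperSemicontinuousOn u (norm ⁻¹' I)) :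
    UpperSemicontinuousOn (sphSup u) I := by
  intro t ht c hc
  have hnear : ∀ᶠ y in 𝓝ˢ (norm ⁻¹' {t}), ‖y‖ ∈ I → u y < c := by
    refine eventually_nhdsSet_iff_forall.2 fun y hy => eventually_nhdsWithin_iff.1 ?_
    obtain rfl : ‖y‖ = t := hy
    exact hu y ht c ((le_sphSup u y).trans_lt hc)
  have hclosed : IsClosedMap (norm : EucSp n → ℝ) := by
    simpa only [funext dist_zero_left] using isClosedMap_dist (0 : EucSp n)
  have hspheres := eventually_comap.1 (hclosed.comap_nhds_le hnear)
  filter_upwards [nhdsWithin_le_nhds hspheres, self_mem_nhdsWithin] with s hs hsI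
  rcases (Metric.sphere (0 : EucSp n) s).eq_empty_or_nonempty with hempty | hne
  · have hbot : sphSup u s = ⊥ := by
      rw [sphSup, show {y : EucSp n | ‖y‖ = s} = ∅ by simpa [Set.ext_iff] using hempty]
      simp
    exact hbot.trans_lt (bot_le.trans_lt hc)
  · obtain ⟨y, rfl, hy⟩ := exists_eq_sphSup hne
      (hu.mono fun y hy => by simpa [mem_sphere_zero_iff_norm.1 hy])
    exact hy ▸ hs y rfl hsI

theorem IsFSubharmonicOn.sphSup_norm {F : Set (Matrix (Fin n) (Fin n) ℝ)} {I : Set ℝ}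
    (hF : STInvariant F) (hu : IsFSubharmonicOn F (norm ⁻¹' I) u) :
    IsFSubharmonicOn F (norm ⁻¹' I) fun x => sphSup u ‖x‖ := by
  obtain ⟨husc, htop, htest⟩ := hu
  have hattained (x : EucSp n) (hx : ‖x‖ ∈ I) : ∃ y, ‖y‖ = ‖x‖ ∧ u y = sphSup u ‖x‖ :=
    exists_eq_sphSup ⟨x, by simp⟩ (husc.mono fun y hy => by simpa [mem_sphere_zero_iff_norm.1 hy])
  refine ⟨(upperSemicontinuousOn_sphSup husc).comp continuous_norm.continuousOn fun x hx => hx,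
    fun x hx => ?_, fun x₀ hx₀ φ hφ hle heq => ?_⟩
  · obtain ⟨y, hyx, hy⟩ := hattained x hx
    exact hy.symm.trans_lt (htop y (by simpa [hyx]))
  · obtain ⟨y₀, hy₀x₀, hy₀⟩ := hattained x₀ hx₀
    obtain ⟨g, hg, rfl, hgF⟩ := hF.exists_rotation hy₀x₀
    have hnorm := norm_toEuclideanLin_of_mem_orthogonalGroup hg
    have hsmooth : ContDiff ℝ 2 (toEuclideanLin g) := (toEuclideanCLM (𝕜 := ℝ) g).contDiff
    have hrot : Tendsto (toEuclideanLin g) (𝓝[norm ⁻¹' I] y₀)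
        (𝓝[norm ⁻¹' I] toEuclideanLin g y₀) :=
      hsmooth.continuous.continuousWithinAt.tendsto_nhdsWithin fun z hz => by simpa [hnorm]
    have htouch : ∀ᶠ z in 𝓝[norm ⁻¹' I] y₀, u z ≤ (φ (toEuclideanLin g z) : EReal) := by
      filter_upwards [hrot.eventually hle] with z hz
      exact (le_sphSup u z).trans (hnorm z ▸ hz)
    have hhess := htest y₀ (by simpa [hnorm] using hx₀) (φ ∘ toEuclideanLin g)
      (hφ.comp y₀ hsmooth.contDiffAt) htouch (hy₀.trans heq)
    exact hgF _ (hess_comp_toEuclideanLin g hφ ▸ hhess)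

end SphericalMaximum

section MaximumPrinciple

variable {n : ℕ} {F : Set (Matrix (Fin n) (Fin n) ℝ)} {X : Set (EucSp n)} {u : EucSp n → EReal}

theorem IsFSubharmonicOn.not_isLocalMaxOn_add_mul_norm_sq (hu : IsFSubharmonicOn F X u) {ε : ℝ}
    (hε : (-(2 * ε)) • (1 : Matrix (Fin n) (Fin n) ℝ) ∉ F) {x₀ : EucSp n} (hx₀ : x₀ ∈ X)
    (hbot : u x₀ ≠ ⊥) :
    ¬ IsLocalMaxOn (fun x => u x + (ε * ‖x‖ ^ 2 : ℝ)) X x₀ := by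
  intro hmax
  lift u x₀ to ℝ using ⟨(hu.2.1 x₀ hx₀).ne, hbot⟩ with r hr
  have hhess := hu.2.2 x₀ hx₀ (fun z => r + ε * ‖x₀‖ ^ 2 - ε * ‖z‖ ^ 2)
    (contDiffAt_const.sub (contDiffAt_const.mul (contDiff_norm_sq ℝ).contDiffAt)) ?_ ?_
  · exact hε (hess_const_sub_mul_norm_sq (r + ε * ‖x₀‖ ^ 2) ε x₀ ▸ hhess)
  · filter_upwards [hmax] with x hx
    rw [← hr, ← EReal.coe_add] at hx
    rw [EReal.coe_sub]
    exact (EReal.le_sub_iff_add_le (.inl (EReal.coe_ne_bot _)) (.inl (EReal.coe_ne_top _))).2 hx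
  · simp [← hr]

theorem exists_isMaxOn_add_coe {α : Type*} [TopologicalSpace α] {K : Set α} {v : α → EReal}
    {f : α → ℝ} (hK : IsCompact K) (hne : K.Nonempty) (hv : UpperSemicontinuousOn v K)
    (hf : ContinuousOn f K) : ∃ x ∈ K, IsMaxOn (fun x => v x + f x) K x :=
  (hv.add' (continuous_coe_real_ereal.comp_continuousOn hf).upperSemicontinuousOn fun _ _ =>
    EReal.continuousAt_add (.inr (EReal.coe_ne_bot _)) (.inr (EReal.coe_ne_top _))).exists_isMaxOn
      hne hK

theorem exists_pos_forall_mul_norm_sq_le {E : Type*} [SeminormedAddCommGroup E] {K : Set E}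
    (hK : Bornology.IsBounded K) {δ : ℝ} (hδ : 0 < δ) :
    ∃ ε > 0, ∀ y ∈ K, ε * ‖y‖ ^ 2 ≤ δ := by
  obtain ⟨r, hr, hKr⟩ := hK.exists_pos_norm_le
  refine ⟨δ / r ^ 2, by positivity, fun y hy => ?_⟩
  calc δ / r ^ 2 * ‖y‖ ^ 2 ≤ δ / r ^ 2 * r ^ 2 := by gcongr; exact hKr y hy
    _ = δ := div_mul_cancel₀ δ (by positivity)

theorem IsFSubharmonicOn.le_of_forall_mem_frontier_le (hu : IsFSubharmonicOn F X u)
    (hF : ∀ ε : ℝ, 0 < ε → (-ε) • (1 : Matrix (Fin n) (Fin n) ℝ) ∉ F) {K : Set (EucSp n)}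
    (hK : IsCompact K) (hKX : K ⊆ X) {C : EReal} (hC : ∀ x ∈ frontier K, u x ≤ C)
    {x : EucSp n} (hx : x ∈ K) : u x ≤ C := by
  by_contra! hlt
  obtain ⟨c, hCc, hcx⟩ := EReal.lt_iff_exists_real_btwn.1 hlt
  obtain ⟨d, hcd, hdx⟩ := EReal.lt_iff_exists_real_btwn.1 hcx
  rw [EReal.coe_lt_coe_iff] at hcd
  obtain ⟨ε, hε, hsmall⟩ := exists_pos_forall_mul_norm_sq_le hK.isBounded (sub_pos.2 hcd)
  obtain ⟨x₀, hx₀, hmax⟩ := exists_isMaxOn_add_coe (f := fun y => ε * ‖y‖ ^ 2) hK ⟨x, hx⟩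
    (hu.1.mono hKX) (by fun_prop)
  have hlarge : (d : EReal) < u x₀ + (ε * ‖x₀‖ ^ 2 : ℝ) :=
    (hdx.trans_le (le_add_of_nonneg_right (by positivity))).trans_le (hmax hx)
  have hint : x₀ ∈ interior K := by
    by_contra hnot
    have hfr : u x₀ ≤ c := (hC x₀ ⟨subset_closure hx₀, hnot⟩).trans hCc.le
    refine hlarge.not_ge ((add_le_add_left hfr _).trans ?_)
    exact_mod_cast le_sub_iff_add_le'.1 (hsmall x₀ hx₀)
  refine hu.not_isLocalMaxOn_add_mul_norm_sq (hF (2 * ε) (by positivity)) (hKX hx₀) ?_ ?_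
  · intro hbot
    simp [hbot] at hlarge
  · exact (hmax.isLocalMax (mem_interior_iff_mem_nhds.1 hint)).on X

theorem IsFSubharmonicOn.monotoneOn_sphSup (hu : IsFSubharmonicOn F X u)
    (hF : ∀ ε : ℝ, 0 < ε → (-ε) • (1 : Matrix (Fin n) (Fin n) ℝ) ∉ F) :
    MonotoneOn (sphSup u) {t | Metric.closedBall 0 t ⊆ X} := by
  intro s _ t ht hst
  refine sSup_le ?_
  rintro _ ⟨y, rfl, rfl⟩
  refine hu.le_of_forall_mem_frontier_le hF (isCompact_closedBall 0 t) ht (fun z hz => ?_)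
    (mem_closedBall_zero_iff.2 hst)
  have hzt : ‖z‖ = t :=
    mem_sphere_zero_iff_norm.1 (Metric.frontier_closedBall_subset_sphere hz)
  exact hzt ▸ le_sphSup u z

end MaximumPrinciple

section ConeSubequation

variable {n : ℕ} {F : Set (Matrix (Fin n) (Fin n) ℝ)}

theorem exists_nonneg_posSemidef_add_smul_one {ι : Type*} [Finite ι] [DecidableEq ι]
    {B : Matrix ι ι ℝ} (hB : B.IsSymm) : ∃ c : ℝ, 0 ≤ c ∧ (B + c • 1).PosSemidef := by
  have := Fintype.ofFinite ι
  let L := toEuclideanCLM (n := ι) (𝕜 := ℝ) B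
  refine ⟨‖L‖, norm_nonneg L, .of_dotProduct_mulVec_nonneg ?_ fun x => ?_⟩
  · simp [IsHermitian, conjTranspose_eq_transpose_of_trivial, hB.eq]
  · let v : EuclideanSpace ℝ ι := WithLp.toLp 2 x
    have hbound : |inner ℝ v (L v)| ≤ ‖L‖ * ‖v‖ ^ 2 := calc
      |inner ℝ v (L v)| ≤ ‖v‖ * ‖L v‖ := abs_real_inner_le_norm _ _
      _ ≤ ‖v‖ * (‖L‖ * ‖v‖) := by gcongr; exact L.le_opNorm v
      _ = ‖L‖ * ‖v‖ ^ 2 := by ring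
    have hform : star x ⬝ᵥ (B + ‖L‖ • 1) *ᵥ x = inner ℝ v (L v) + ‖L‖ * ‖v‖ ^ 2 := by
      rw [inner_toEuclideanCLM, EuclideanSpace.real_norm_sq_eq, add_mulVec, smul_mulVec,
        one_mulVec, dotProduct_add, dotProduct_smul, star_trivial]
      simp [v, dotProduct, sq]
    linarith [neg_abs_le (inner ℝ v (L v))]

theorem IsConeSubequation.neg_smul_one_notMem (hF : IsConeSubequation F)
    {B : Matrix (Fin n) (Fin n) ℝ} (hB : B.IsSymm) (hBF : B ∉ F) {ε : ℝ} (hε : 0 < ε) :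
    (-ε) • (1 : Matrix (Fin n) (Fin n) ℝ) ∉ F := by
  intro hmem
  obtain ⟨c, hc, hpos⟩ := exists_nonneg_posSemidef_add_smul_one hB
  have hscaled : (-c) • (1 : Matrix (Fin n) (Fin n) ℝ) ∈ F := by
    have := hF.2 _ hmem (c / ε) (by positivity)
    rwa [smul_smul, mul_neg, div_mul_cancel₀ c hε.ne'] at this
  exact hBF (by simpa using hF.1.2.2 _ hscaled _ hpos)

theorem HasRieszChar.exists_isSymm_notMem {p : ℝ} (hn : 1 ≤ n) (hF : HasRieszChar F p) :
    ∃ B : Matrix (Fin n) (Fin n) ℝ, B.IsSymm ∧ B ∉ F := by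
  by_contra! hall
  exact (hF.2 (EuclideanSpace.single ⟨0, hn⟩ 1) (by simp)).2 ⟨univ, univ_mem, fun B _ => hall B⟩

end ConeSubequation

theorem stmt9_general {n : ℕ} (F : Set (Matrix (Fin n) (Fin n) ℝ)) :
    (STInvariant F → ∀ (I : Set ℝ) (u : EucSp n → EReal), IsFSubharmonicOn F (norm ⁻¹' I) u →
      IsFSubharmonicOn F (norm ⁻¹' I) fun x => sphSup u ‖x‖) ∧
    ((∀ ε : ℝ, 0 < ε → (-ε) • (1 : Matrix (Fin n) (Fin n) ℝ) ∉ F) →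
      ∀ (X : Set (EucSp n)) (u : EucSp n → EReal), IsFSubharmonicOn F X u →
        MonotoneOn (sphSup u) {t | Metric.closedBall 0 t ⊆ X}) :=
  ⟨fun hST _ _ hu => hu.sphSup_norm hST, fun hF _ _ hu => hu.monotoneOn_sphSup hF⟩

/-- (i) The spherical maximum of an `F`-subharmonic function on an annulus is a radial
`F`-subharmonic function there; (ii) on a ball it is moreover nondecreasing in the radius. -/
theorem stmt9 (n : ℕ) (hn : 1 ≤ n)
    (F : Set (Matrix (Fin n) (Fin n) ℝ))
    (hF : IsConeSubequation F) (hST : STInvariant F)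
    (hchar : ∃ p : ℝ, HasRieszChar F p) :
    (∀ a b : ℝ, 0 ≤ a → a < b → ∀ u : EucSp n → EReal,
      IsFSubharmonicOn F {x : EucSp n | a < ‖x‖ ∧ ‖x‖ < b} u →
      IsFSubharmonicOn F {x : EucSp n | a < ‖x‖ ∧ ‖x‖ < b} (fun x => sphSup u ‖x‖)) ∧
    (∀ R : ℝ, 0 < R → ∀ u : EucSp n → EReal,
      IsFSubharmonicOn F {x : EucSp n | ‖x‖ < R} u →
      MonotoneOn (sphSup u) (Set.Ico 0 R)) := by
  obtain ⟨B, hB, hBF⟩ := hchar.choose_spec.exists_isSymm_notMem hn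
  exact ⟨fun a b _ _ => (stmt9_general F).1 hST (Ioo a b), fun _ _ u hu =>
    ((stmt9_general F).2 (fun _ => hF.neg_smul_one_notMem hB hBF) _ u hu).mono
      fun _ ht _ hx => (mem_closedBall_zero_iff.1 hx).trans_lt ht.2⟩

end
end
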